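/- arXiv:1708.04403 — 8 statements merged into one kernel-verified Lean document; each statement's English description precedes it below -/
import Mathlib

section
/- Let μ be a probability measure on a measurable space X, let c : X → {−1,+1} be a measurable target concept, and let H be a finite set of measurable hypotheses h : X → {−1,+1} with c ∈ H. Fix integers l ≥ 1, u ≥ 1, i ≥ 0 and fixed measurable pseudo-labelers g₀, …, g_{i−1} : X → {−1,+1}. Draw l + i·u points independently from μ, indexed by Fin l ⊕ (Fin i × Fin u) (product measure); assign to each of the first l points the label given by c, and to each point in the k-th block of u points the label given by g_k. For h ∈ H let N(h) denote the number of sample points on which h disagrees with its assigned label. Suppose ε ∈ (0,1), δ ∈ (0,1) and l ≥ (2/ε²)·ln(2·|H|/δ). Then, with probability at least 1 − δ over the draw of the sample, every h ∈ H that minimizes N over H satisfies err(h) ≤ (ε·√(l² + i·u·l) − u·Σ_{k<i} (d(h,g_k) − err(g_k))) / l. -/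
open MeasureTheory

/-- Hoeffding for the difference of empirical risks. -/
lemma aux_hoeffding {X ι : Type*} [Fintype ι] [MeasurableSpace X] (μ : Measure X)
    [IsProbabilityMeasure μ] (c h : X → Bool) (hc : Measurable c) (hh : Measurable h)
    (y : ι → X → Bool) (hy : ∀ t, Measurable (y t)) (s : ℝ) (hs : 0 ≤ s) :
    (Measure.pi fun _ : ι => μ).real
      {ω | ((Finset.univ.filter fun t => h (ω t) ≠ y t (ω t)).card ≤
            (Finset.univ.filter fun t => c (ω t) ≠ y t (ω t)).card) ∧
          s ≤ ∑ t, (μ.real {x | h x ≠ y t x} - μ.real {x | c x ≠ y t x})}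
      ≤ Real.exp (-s ^ 2 / (2 * Fintype.card ι)) := by
  have mset : ∀ (f : X → Bool), Measurable f → ∀ t, MeasurableSet {x | f x ≠ y t x} :=
    fun f hf t => (measurableSet_eq_fun hf (hy t)).compl
  let W : ι → X → ℝ := fun t x =>
    Set.indicator {x | c x ≠ y t x} 1 x - Set.indicator {x | h x ≠ y t x} 1 x
  have hWm : ∀ t, Measurable (W t) := fun t =>
    (measurable_one.indicator (mset c hc t)).sub (measurable_one.indicator (mset h hh t))
  have hWi : ∀ t, ∫ x, W t x ∂μ = μ.real {x | c x ≠ y t x} - μ.real {x | h x ≠ y t x} := by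
    intro t
    simp only [W]
    rw [integral_sub, integral_indicator_one (mset c hc t), integral_indicator_one (mset h hh t)]
    · exact (integrable_const (1 : ℝ)).indicator (mset c hc t)
    · exact (integrable_const (1 : ℝ)).indicator (mset h hh t)
  have hWb : ∀ t x, W t x ∈ Set.Icc (-1 : ℝ) 1 := by
    intro t x
    simp only [W, Set.indicator, Pi.one_apply, Set.mem_Icc]
    split_ifs <;> norm_num
  let Z : ι → (ι → X) → ℝ := fun t ω => W t (ω t) - ∫ x, W t x ∂μ
  have hsub : ∀ t ∈ Finset.univ,
      ProbabilityTheory.HasSubgaussianMGF (Z t) 1 (Measure.pi fun _ : ι => μ) := by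
    intro t _
    have h1 := ProbabilityTheory.hasSubgaussianMGF_of_mem_Icc
      (μ := Measure.pi fun _ : ι => μ) (X := fun ω => W t (ω t)) (a := -1) (b := 1)
      ((hWm t).comp (measurable_pi_apply t)).aemeasurable (ae_of_all _ fun ω => hWb t _)
    rw [integral_comp_eval (μ := fun _ : ι => μ) (hWm t).aestronglyMeasurable] at h1
    have e : ((‖(1 : ℝ) - -1‖₊ / 2) ^ 2 : NNReal) = 1 := by
      ext; norm_num
    rwa [e] at h1
  have hind : ProbabilityTheory.iIndepFun Z (Measure.pi fun _ : ι => μ) :=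
    ProbabilityTheory.iIndepFun_pi (X := fun t x => W t x - ∫ x, W t x ∂μ)
      (fun t => ((hWm t).sub_const _).aemeasurable)
  have key := ProbabilityTheory.HasSubgaussianMGF.measure_sum_ge_le_of_iIndepFun hind hsub hs
  simp only [Finset.sum_const, Finset.card_univ, nsmul_eq_mul, mul_one, NNReal.coe_natCast] at key
  refine le_trans (measureReal_mono ?_) key
  rintro ω ⟨hN, hE⟩
  have hcard : ∀ f : X → Bool, ((Finset.univ.filter fun t => f (ω t) ≠ y t (ω t)).card : ℝ)
      = ∑ t, Set.indicator {x | f x ≠ y t x} (1 : X → ℝ) (ω t) := by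
    intro f
    simp [Finset.card_filter, Set.indicator]
  have hN' : ((Finset.univ.filter fun t => h (ω t) ≠ y t (ω t)).card : ℝ) ≤
    (Finset.univ.filter fun t => c (ω t) ≠ y t (ω t)).card := by exact_mod_cast hN
  rw [hcard, hcard] at hN'
  simp only [Set.mem_ofPred_eq, Z, hWi, W, Finset.sum_sub_distrib] at hE ⊢
  linarith

/-- PAC bound for an empirical-risk minimizer trained on `l` examples
labeled by the target concept `c` together with `i` blocks of `u` random instances
pseudo-labeled by `g₀,…,g_{i−1}`. With probability at least `1 − δ` over the i.i.d.
sample, every empirical-risk minimizer `h ∈ H` satisfies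
`err(h) ≤ (ε·√(l² + i·u·l) − u·Σ_{k<i} (d(h,g_k) − err(g_k))) / l`. -/
theorem stmt0 {X : Type*} [MeasurableSpace X] (μ : Measure X) [IsProbabilityMeasure μ]
    (c : X → Bool) (hc : Measurable c)
    (H : Finset (X → Bool)) (hHmeas : ∀ h ∈ H, Measurable h) (hcH : c ∈ H)
    (l u i : ℕ) (hl : 1 ≤ l) (hu : 1 ≤ u)
    (g : Fin i → X → Bool) (hg : ∀ k, Measurable (g k))
    (ε δ : ℝ) (hε : ε ∈ Set.Ioo (0 : ℝ) 1) (hδ : δ ∈ Set.Ioo (0 : ℝ) 1)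
    (hlbig : (l : ℝ) ≥ 2 / ε ^ 2 * Real.log (2 * H.card / δ)) :
    ((Measure.pi fun _ : Fin l ⊕ (Fin i × Fin u) => μ)
      {ω | ∀ h ∈ H,
        (∀ h' ∈ H,
          (Finset.univ.filter fun t : Fin l ⊕ (Fin i × Fin u) =>
            h (ω t) ≠ Sum.elim (fun _ => c) (fun p => g p.1) t (ω t)).card ≤
          (Finset.univ.filter fun t : Fin l ⊕ (Fin i × Fin u) =>
            h' (ω t) ≠ Sum.elim (fun _ => c) (fun p => g p.1) t (ω t)).card) →
        (μ {x | h x ≠ c x}).toReal ≤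
          (ε * Real.sqrt ((l : ℝ) ^ 2 + (i : ℝ) * (u : ℝ) * (l : ℝ))
            - (u : ℝ) * ∑ k : Fin i,
                ((μ {x | h x ≠ g k x}).toReal
                  - (μ {x | g k x ≠ c x}).toReal)) / (l : ℝ)}).toReal
      ≥ 1 - δ := by
  classical
  obtain ⟨hε0, hε1⟩ := hε
  obtain ⟨hδ0, hδ1⟩ := hδ
  have hl0 : (0 : ℝ) < l := by exact_mod_cast hl
  have hH0 : (0 : ℝ) < H.card := by exact_mod_cast Finset.card_pos.mpr ⟨c, hcH⟩
  set y : Fin l ⊕ (Fin i × Fin u) → X → Bool :=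
    Sum.elim (fun _ => c) (fun p => g p.1) with hy
  have hym : ∀ t, Measurable (y t) := by
    rintro (t | p)
    · exact hc
    · exact hg p.1
  set s : ℝ := ε * Real.sqrt ((l : ℝ) ^ 2 + (i : ℝ) * (u : ℝ) * (l : ℝ)) with hsdef
  have hs : 0 ≤ s := by positivity
  set P := (Measure.pi fun _ : Fin l ⊕ (Fin i × Fin u) => μ) with hP
  let B : (X → Bool) → Set (Fin l ⊕ (Fin i × Fin u) → X) := fun h =>
      {ω | ((Finset.univ.filter fun t => h (ω t) ≠ y t (ω t)).card ≤
            (Finset.univ.filter fun t => c (ω t) ≠ y t (ω t)).card) ∧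
          s ≤ ∑ t, (μ.real {x | h x ≠ y t x} - μ.real {x | c x ≠ y t x})}
  have hexp : Real.exp (-s ^ 2 / (2 * Fintype.card (Fin l ⊕ (Fin i × Fin u)))) ≤
      δ / (2 * H.card) := by
    have e1 : -s ^ 2 / (2 * Fintype.card (Fin l ⊕ (Fin i × Fin u))) = -(ε ^ 2 * l / 2) := by
      have hpos : (0 : ℝ) < l + i * u := by positivity
      rw [hsdef, mul_pow, Real.sq_sqrt (by positivity)]
      simp only [Fintype.card_sum, Fintype.card_prod, Fintype.card_fin]
      push_cast
      field_simp
    rw [e1, ← Real.le_log_iff_exp_le (by positivity)]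
    have e2 : Real.log (δ / (2 * H.card)) = - Real.log (2 * H.card / δ) := by
      rw [← Real.log_inv, inv_div]
    rw [e2]
    have : ε ^ 2 / 2 * (2 / ε ^ 2 * Real.log (2 * H.card / δ)) ≤ ε ^ 2 / 2 * l :=
      mul_le_mul_of_nonneg_left hlbig (by positivity)
    have e3 : ε ^ 2 / 2 * (2 / ε ^ 2 * Real.log (2 * H.card / δ)) =
      Real.log (2 * H.card / δ) := by field_simp
    linarith
  have hB : ∀ h ∈ H, P.real (B h) ≤ δ / (2 * H.card) := fun h hh =>
    (aux_hoeffding μ c h hc (hHmeas h hh) y hym s hs).trans hexp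
  have hU : P.real (⋃ h ∈ H, B h) ≤ δ := by
    refine (measureReal_biUnion_finset_le H B).trans ((Finset.sum_le_sum hB).trans ?_)
    rw [Finset.sum_const, nsmul_eq_mul]
    have : (H.card : ℝ) * (δ / (2 * H.card)) = δ / 2 := by field_simp
    linarith
  have hsum : ∀ h : X → Bool, ∑ t, (μ.real {x | h x ≠ y t x} - μ.real {x | c x ≠ y t x}) =
      l * μ.real {x | h x ≠ c x} + u * ∑ k : Fin i,
        (μ.real {x | h x ≠ g k x} - μ.real {x | g k x ≠ c x}) := by
    intro h
    have e : ∀ k, {x | g k x ≠ c x} = {x | c x ≠ g k x} := fun k => by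
      ext x; exact ne_comm
    simp only [e]
    rw [Fintype.sum_sum_type, Fintype.sum_prod_type]
    simp [hy]
    rw [mul_sub, Finset.mul_sum, Finset.mul_sum]
  change P.real _ ≥ 1 - δ
  set S : Set (Fin l ⊕ (Fin i × Fin u) → X) := {ω | _} with hS
  have hcov : S ∪ (⋃ h ∈ H, B h) = Set.univ := by
    refine Set.eq_univ_of_forall fun ω => ?_
    by_contra hω
    rw [Set.mem_union, not_or] at hω
    obtain ⟨h1, h2⟩ := hω
    apply h1
    intro h hh hmin
    by_contra hlt
    apply h2
    refine Set.mem_biUnion hh ⟨hmin c hcH, ?_⟩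
    rw [hsum h]
    rw [not_le, div_lt_iff₀ hl0] at hlt
    simp only [Measure.real]
    linarith
  have h1 : (1 : ℝ) = P.real (S ∪ (⋃ h ∈ H, B h)) := by rw [hcov]; simp [hP]
  have h2 := measureReal_union_le (μ := P) S (⋃ h ∈ H, B h)
  linarith
end

section
/- Let (Ω, P) be a probability space, y : Ω → {−1,+1} measurable, and let ζ be a real number with 0 ≤ ζ ≤ 1/6. Let i ≥ 1 be an integer, and let h₁⁰, h₁ⁱ and h₂⁰, …, h₂^{i−1} be measurable classifiers Ω → {−1,+1}. Write err(h) = P{ω : h ω ≠ y ω} and d(f,g) = P{ω : f ω ≠ g ω}. Assume: (a) for every k < i, the events {h₁ⁱ ≠ y} and {h₂ᵏ ≠ y} are independent; (b) err(h₂ᵏ) ≤ ζ for every k < i; and (c) err(h₁ⁱ) > err(h₁⁰) / (2·(1 − 2ζ)). Then Σ_{k<i} (d(h₁ⁱ, h₂ᵏ) − err(h₂ᵏ)) > i · err(h₁⁰) / 2. -/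
open MeasureTheory

/-- co-training with conditionally independent views. If the error events of
`h₁ⁱ` and each `h₂ᵏ` (`k < i`) are independent, each `err(h₂ᵏ) ≤ ζ ≤ 1/6`, and
`err(h₁ⁱ) > err(h₁⁰)/(2(1−2ζ))`, then `Σ_{k<i} (d(h₁ⁱ,h₂ᵏ) − err(h₂ᵏ)) > i·err(h₁⁰)/2`. -/
theorem stmt4 {Ω : Type*} [MeasurableSpace Ω] (P : Measure Ω) [IsProbabilityMeasure P]
    (y : Ω → Bool) (hy : Measurable y)
    (ζ : ℝ) (hζ0 : 0 ≤ ζ) (hζ : ζ ≤ 1 / 6)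
    (i : ℕ) (hi : 1 ≤ i)
    (h₁0 h₁i : Ω → Bool) (h₂ : ℕ → Ω → Bool)
    (hm0 : Measurable h₁0) (hmi : Measurable h₁i) (hm2 : ∀ k, Measurable (h₂ k))
    (hind : ∀ k < i,
      ProbabilityTheory.IndepSet {ω | h₁i ω ≠ y ω} {ω | h₂ k ω ≠ y ω} P)
    (herr2 : ∀ k < i, (P {ω | h₂ k ω ≠ y ω}).toReal ≤ ζ)
    (herr1 : (P {ω | h₁i ω ≠ y ω}).toReal >
      (P {ω | h₁0 ω ≠ y ω}).toReal / (2 * (1 - 2 * ζ))) :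
    ∑ k ∈ Finset.range i,
      ((P {ω | h₁i ω ≠ h₂ k ω}).toReal - (P {ω | h₂ k ω ≠ y ω}).toReal)
      > (i : ℝ) * (P {ω | h₁0 ω ≠ y ω}).toReal / 2 := by
  have key : ∀ k ∈ Finset.range i, (P {ω | h₁0 ω ≠ y ω}).toReal / 2 <
      (P {ω | h₁i ω ≠ h₂ k ω}).toReal - (P {ω | h₂ k ω ≠ y ω}).toReal := by
    intro k hk
    have hk' := Finset.mem_range.mp hk
    have hA : MeasurableSet {ω | h₁i ω ≠ y ω} := (measurableSet_eq_fun hmi hy).compl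
    have hB : MeasurableSet {ω | h₂ k ω ≠ y ω} := (measurableSet_eq_fun (hm2 k) hy).compl
    have hb := herr2 k hk'
    have hI := (ProbabilityTheory.indepSet_iff_measure_inter_eq_mul hA hB P).mp (hind k hk')
    have hset : {ω | h₁i ω ≠ h₂ k ω} =
        ({ω | h₁i ω ≠ y ω} \ {ω | h₂ k ω ≠ y ω}) ∪
        ({ω | h₂ k ω ≠ y ω} \ {ω | h₁i ω ≠ y ω}) := by
      ext ω
      simp only [Set.mem_setOf_eq, Set.mem_union, Set.mem_diff]
      cases h₁i ω <;> cases h₂ k ω <;> cases y ω <;> simp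
    rw [hset]
    generalize {ω | h₁i ω ≠ y ω} = A at *
    generalize {ω | h₂ k ω ≠ y ω} = B at *
    have hI' : P.real (A ∩ B) = P.real A * P.real B := by
      simp only [measureReal_def, hI, ENNReal.toReal_mul]
    simp only [← measureReal_def] at *
    have hd : Disjoint (A \ B) (B \ A) := disjoint_sdiff_sdiff
    rw [measureReal_union hd (hB.diff hA)]
    have e1 := measureReal_inter_add_sdiff (μ := P) (s := A) hB
    have e2 := measureReal_inter_add_sdiff (μ := P) (s := B) hA
    rw [Set.inter_comm] at e2
    have ha : 0 ≤ P.real A := measureReal_nonneg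
    rw [gt_iff_lt, div_lt_iff₀ (by linarith)] at herr1
    nlinarith [mul_le_mul_of_nonneg_left hb ha]
  have := Finset.sum_lt_sum_of_nonempty (Finset.nonempty_range_iff.mpr (by omega)) key
  simp only [Finset.sum_const, Finset.card_range, nsmul_eq_mul] at this
  rw [gt_iff_lt, mul_div_assoc]
  exact this
end

section
/- Let U and L be finite types. Let Q : U → U → ℝ and B : U → L → ℝ have all entries nonnegative, and let c_U : U → {−1,+1} and c_L : L → {−1,+1} be labelings satisfying the perfect-graph condition: Q i j > 0 → c_U i = c_U j, and B i s > 0 → c_U i = c_L s. Let Y : L → ℝ be given by Y s = c_L s (as ±1 reals). Assume that for every t ∈ U the series F t = Σ'_{m : ℕ} ((Q^m * B) *ᵥ Y) t is summable. Then for every t ∈ U: F t ≠ 0 if and only if there exist j ∈ U and s ∈ L with Relation.ReflTransGen (fun a b => Q a b > 0) t j and B j s > 0; and in that case F t · (c_U t) > 0, i.e., the propagated value has the correct sign. -/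
open Matrix

/-- label propagation on perfect graphs. With nonnegative blocks
`Q = P^{UU}` and `B = P^{UL}` satisfying the perfect-graph condition and ±1 labelings
`cU`, `cL`, the propagated value `F t = Σ'_m ((Q^m * B) *ᵥ cL) t` is nonzero iff `t`
is connected through positive entries of `Q` to some `j` with a positive entry
`B j s`, and in that case `F t` has the sign of the true label `cU t`. -/
theorem stmt7 {U L : Type*} [Fintype U] [Fintype L] [DecidableEq U]
    (Q : Matrix U U ℝ) (B : Matrix U L ℝ)
    (hQ : ∀ i j, 0 ≤ Q i j) (hB : ∀ i s, 0 ≤ B i s)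
    (cU : U → ℝ) (cL : L → ℝ)
    (hcU : ∀ i, cU i = 1 ∨ cU i = -1) (hcL : ∀ s, cL s = 1 ∨ cL s = -1)
    (hperfQ : ∀ i j, 0 < Q i j → cU i = cU j)
    (hperfB : ∀ i s, 0 < B i s → cU i = cL s)
    (F : U → ℝ)
    (hsum : ∀ t, Summable (fun m : ℕ => ((Q ^ m * B) *ᵥ cL) t))
    (hF : ∀ t, F t = ∑' m : ℕ, ((Q ^ m * B) *ᵥ cL) t) :
    ∀ t, (F t ≠ 0 ↔
        ∃ j s, Relation.ReflTransGen (fun a b => 0 < Q a b) t j ∧ 0 < B j s)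
      ∧ (F t ≠ 0 → 0 < F t * cU t) := by
  have hsq : ∀ i, cU i * cU i = 1 := fun i => by
    rcases hcU i with h | h <;> rw [h] <;> norm_num
  have hne : ∀ i, cU i ≠ 0 := fun i h => by
    have := hsq i
    rw [h] at this
    norm_num at this
  obtain ⟨h, hdef⟩ : ∃ h : ℕ → U → ℝ, ∀ m t, h m t = ((Q ^ m * B) *ᵥ cL) t * cU t :=
    ⟨_, fun _ _ => rfl⟩
  have h0 : ∀ t, h 0 t = ∑ s, B t s := fun t => by
    rw [hdef, pow_zero, Matrix.one_mul, Matrix.mulVec, dotProduct, Finset.sum_mul]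
    refine Finset.sum_congr rfl fun s _ => ?_
    rcases (hB t s).eq_or_lt with e | e
    · rw [← e]; simp
    · rw [← hperfB t s e, mul_assoc, hsq, mul_one]
  have hS : ∀ m t, h (m + 1) t = ∑ j, Q t j * h m j := fun m t => by
    rw [hdef, pow_succ', Matrix.mul_assoc, ← Matrix.mulVec_mulVec]
    rw [Matrix.mulVec, dotProduct, Finset.sum_mul]
    refine Finset.sum_congr rfl fun j _ => ?_
    rw [hdef]
    rcases (hQ t j).eq_or_lt with e | e
    · rw [← e]; simp
    · rw [hperfQ t j e, mul_assoc]
  have hnn : ∀ m t, 0 ≤ h m t := by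
    intro m
    induction m with
    | zero => intro t; rw [h0]; exact Finset.sum_nonneg fun s _ => hB t s
    | succ m ih =>
      intro t; rw [hS]; exact Finset.sum_nonneg fun j _ => mul_nonneg (hQ t j) (ih j)
  have hsm : ∀ t, Summable (fun m => h m t) := fun t => by
    simp only [hdef]
    exact (hsum t).mul_right _
  have hFh : ∀ t, F t * cU t = ∑' m, h m t := fun t => by
    simp only [hdef]
    rw [hF, tsum_mul_right]
  have hpath : ∀ m t, 0 < h m t →
      ∃ j s, Relation.ReflTransGen (fun a b => 0 < Q a b) t j ∧ 0 < B j s := by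
    intro m
    induction m with
    | zero =>
      intro t ht
      rw [h0] at ht
      obtain ⟨s, _, hs⟩ := Finset.exists_lt_of_sum_lt (f := fun _ => (0 : ℝ)) (by simpa using ht)
      exact ⟨t, s, .refl, hs⟩
    | succ m ih =>
      intro t ht
      rw [hS] at ht
      obtain ⟨j, _, hj⟩ := Finset.exists_lt_of_sum_lt (f := fun _ => (0 : ℝ)) (by simpa using ht)
      have hq : 0 < Q t j := pos_of_mul_pos_left hj (hnn m j)
      have hh : 0 < h m j := pos_of_mul_pos_right hj (hQ t j)
      obtain ⟨k, s, hk, hs⟩ := ih j hh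
      exact ⟨k, s, .head hq hk, hs⟩
  have hconv : ∀ t j s, Relation.ReflTransGen (fun a b => 0 < Q a b) t j → 0 < B j s →
      ∃ m, 0 < h m t := by
    intro t j s hp hs
    induction hp using Relation.ReflTransGen.head_induction_on with
    | refl =>
      refine ⟨0, ?_⟩
      rw [h0]
      exact Finset.sum_pos' (fun s _ => hB j s) ⟨s, Finset.mem_univ _, hs⟩
    | head hq _ ih =>
      obtain ⟨m, hm⟩ := ih
      refine ⟨m + 1, ?_⟩
      rw [hS]
      exact Finset.sum_pos' (fun j _ => mul_nonneg (hQ _ j) (hnn m j))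
        ⟨_, Finset.mem_univ _, mul_pos hq hm⟩
  intro t
  have hpos : F t ≠ 0 → 0 < F t * cU t := fun hf => by
    refine lt_of_le_of_ne ?_ (mul_ne_zero hf (hne t)).symm
    rw [hFh]
    exact tsum_nonneg fun m => hnn m t
  refine ⟨⟨fun hf => ?_, ?_⟩, hpos⟩
  · have hp := hpos hf
    rw [hFh] at hp
    by_contra hcon
    have hz : ∀ m, h m t = 0 := fun m =>
      le_antisymm (not_lt.1 fun hlt => hcon (hpath m t hlt)) (hnn m t)
    simp [hz] at hp
  · rintro ⟨j, s, hp, hs⟩ hf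
    obtain ⟨m, hm⟩ := hconv t j s hp hs
    have := (hsm t).tsum_pos (fun m => hnn m t) m hm
    rw [← hFh, hf, zero_mul] at this
    exact lt_irrefl _ this
end

section
/- Let V be a finite type, c : V → {−1,+1}, L : Set V, and let r₁, r₂ : V → V → Prop be relations satisfying the perfect-graph condition: for v = 1, 2, r_v a b → c a = c b. For a relation r and S : Set V define cl_r(S) = {x | ∃ y ∈ S, Relation.ReflTransGen r y x}, and define S : ℕ → Set V by S 0 = L and S (k+1) = cl_{r₁}(S k) ∪ cl_{r₂}(S k). Then: (i) (∃ k, S k = Set.univ) if and only if every x ∈ V satisfies ∃ y ∈ L, Relation.ReflTransGen (fun a b => r₁ a b ∨ r₂ a b) y x; and (ii) for every x ∈ V and every y ∈ L with Relation.ReflTransGen (fun a b => r₁ a b ∨ r₂ a b) y x, one has c x = c y, so every instance reached by the combinative propagation receives its correct label. -/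
/-- co-training with perfect graphs. The combinative label propagation
covers all of `V` iff every vertex is reachable from `L` in the combined graph; and
with perfect graphs every vertex reached by combined propagation receives its correct
label. -/
theorem stmt9 {V : Type*} [Fintype V] (c : V → Bool) (L : Set V)
    (r₁ r₂ : V → V → Prop)
    (hp₁ : ∀ a b, r₁ a b → c a = c b) (hp₂ : ∀ a b, r₂ a b → c a = c b)
    (S : ℕ → Set V) (hS0 : S 0 = L)
    (hSsucc : ∀ k, S (k + 1) =
      {x | ∃ y ∈ S k, Relation.ReflTransGen r₁ y x} ∪
      {x | ∃ y ∈ S k, Relation.ReflTransGen r₂ y x}) :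
    ((∃ k, S k = Set.univ) ↔
      ∀ x : V, ∃ y ∈ L, Relation.ReflTransGen (fun a b => r₁ a b ∨ r₂ a b) y x)
    ∧ ∀ x : V, ∀ y ∈ L,
        Relation.ReflTransGen (fun a b => r₁ a b ∨ r₂ a b) y x → c x = c y := by
  have hmono : Monotone S := by
    refine monotone_nat_of_le_succ fun k x hx => ?_
    rw [hSsucc]
    exact Or.inl ⟨x, hx, Relation.ReflTransGen.refl⟩
  have hsound : ∀ k, ∀ x ∈ S k,
      ∃ y ∈ L, Relation.ReflTransGen (fun a b => r₁ a b ∨ r₂ a b) y x := by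
    intro k
    induction k with
    | zero =>
      intro x hx
      rw [hS0] at hx
      exact ⟨x, hx, Relation.ReflTransGen.refl⟩
    | succ k ih =>
      intro x hx
      rw [hSsucc] at hx
      rcases hx with ⟨z, hz, hzx⟩ | ⟨z, hz, hzx⟩
      · obtain ⟨y, hy, hyz⟩ := ih z hz
        exact ⟨y, hy, hyz.trans (Relation.ReflTransGen.mono (fun a b h => Or.inl h) _ _ hzx)⟩
      · obtain ⟨y, hy, hyz⟩ := ih z hz
        exact ⟨y, hy, hyz.trans (Relation.ReflTransGen.mono (fun a b h => Or.inr h) _ _ hzx)⟩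
  have hcomplete : ∀ y ∈ L, ∀ x,
      Relation.ReflTransGen (fun a b => r₁ a b ∨ r₂ a b) y x → ∃ k, x ∈ S k := by
    intro y hy x h
    induction h with
    | refl => exact ⟨0, by rw [hS0]; exact hy⟩
    | tail _ hbc ih =>
      obtain ⟨k, hk⟩ := ih
      refine ⟨k + 1, ?_⟩
      rw [hSsucc]
      rcases hbc with h | h
      · exact Or.inl ⟨_, hk, Relation.ReflTransGen.single h⟩
      · exact Or.inr ⟨_, hk, Relation.ReflTransGen.single h⟩
  refine ⟨⟨?_, ?_⟩, ?_⟩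
  · rintro ⟨k, hk⟩ x
    exact hsound k x (by rw [hk]; trivial)
  · intro h
    have h' : ∀ x, ∃ k, x ∈ S k := fun x => by
      obtain ⟨y, hy, hyx⟩ := h x
      exact hcomplete y hy x hyx
    choose f hf using h'
    refine ⟨Finset.univ.sup f, Set.eq_univ_of_forall fun x => ?_⟩
    exact hmono (Finset.le_sup (Finset.mem_univ x)) (hf x)
  · intro x y _ h
    induction h with
    | refl => rfl
    | tail _ hbc ih =>
      rcases hbc with h | h
      · rw [← hp₁ _ _ h, ih]
      · rw [← hp₂ _ _ h, ih]
end

section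
/- Let μ be a probability measure on a measurable space Ω, let y : Ω → {−1,+1} and f₁, f₂ : Ω → ℝ be measurable, and assume f₁ ω ≠ 0 and f₂ ω ≠ 0 for μ-almost every ω. Define err₁ = μ{ω : f₁ ω · y ω < 0}, err₂ = μ{ω : f₂ ω · y ω < 0}, d = μ{ω : f₁ ω · f₂ ω < 0}, and err_com = μ{ω : (f₁ ω + f₂ ω) · y ω ≤ 0}. Then err_com ≥ (err₁ + err₂ − d) / 2. -/
open MeasureTheory

/-- the error of the margin combination `sign(f₁+f₂)` is at least the
probability that both individual classifiers err, i.e.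
`err_com ≥ (err₁ + err₂ − d)/2`. -/
theorem stmt12 {Ω : Type*} [MeasurableSpace Ω] (μ : Measure Ω) [IsProbabilityMeasure μ]
    (y f₁ f₂ : Ω → ℝ) (hy : Measurable y) (hf₁ : Measurable f₁) (hf₂ : Measurable f₂)
    (hy1 : ∀ ω, y ω = 1 ∨ y ω = -1)
    (hne : ∀ᵐ ω ∂μ, f₁ ω ≠ 0 ∧ f₂ ω ≠ 0) :
    (μ {ω | (f₁ ω + f₂ ω) * y ω ≤ 0}).toReal ≥
      ((μ {ω | f₁ ω * y ω < 0}).toReal + (μ {ω | f₂ ω * y ω < 0}).toReal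
        - (μ {ω | f₁ ω * f₂ ω < 0}).toReal) / 2 := by
  have hA : MeasurableSet {ω | f₁ ω * y ω < 0} := measurableSet_lt (hf₁.mul hy) measurable_const
  have hB : MeasurableSet {ω | f₂ ω * y ω < 0} := measurableSet_lt (hf₂.mul hy) measurable_const
  change μ.real _ ≥ (μ.real _ + μ.real _ - μ.real _) / 2
  set A := {ω | f₁ ω * y ω < 0} with hAd
  set B := {ω | f₂ ω * y ω < 0} with hBd
  have h1 := measureReal_inter_add_sdiff (μ := μ) (s := A) hB
  have h2 := measureReal_inter_add_sdiff (μ := μ) (s := B) hA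
  rw [Set.inter_comm] at h2
  have h3 : μ.real (A ∩ B) ≤ μ.real {ω | (f₁ ω + f₂ ω) * y ω ≤ 0} := by
    refine measureReal_mono ?_ (measure_ne_top _ _)
    rintro ω ⟨ha, hb⟩
    simp only [hAd, hBd, Set.mem_ofPred_eq] at ha hb ⊢
    linarith
  have h4 : μ.real (A \ B ∪ B \ A) = μ.real (A \ B) + μ.real (B \ A) :=
    measureReal_union disjoint_sdiff_sdiff (hB.diff hA)
  have h5 : μ.real (A \ B ∪ B \ A) ≤ μ.real {ω | f₁ ω * f₂ ω < 0} := by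
    refine ENNReal.toReal_mono (measure_ne_top _ _) (measure_mono_ae ?_)
    filter_upwards [hne] with ω hω h
    obtain ⟨n1, n2⟩ := hω
    change f₁ ω * f₂ ω < 0
    have h' : (f₁ ω * y ω < 0 ∧ ¬ f₂ ω * y ω < 0) ∨ (f₂ ω * y ω < 0 ∧ ¬ f₁ ω * y ω < 0) := h
    rcases n1.lt_or_gt with a | a <;> rcases n2.lt_or_gt with b | b <;>
      rcases hy1 ω with e | e <;> rw [e] at h' <;>
      first
        | exact mul_neg_of_neg_of_pos a b
        | exact mul_neg_of_pos_of_neg a b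
        | (exfalso; rcases h' with ⟨p, q⟩ | ⟨p, q⟩ <;> linarith)
  linarith
end

section
/- Let μ be a probability measure on a measurable space Ω, let y : Ω → {−1,+1} and f₁, f₂ : Ω → ℝ be measurable with |f₁| ≤ 1, |f₂| ≤ 1 and f₁ ω ≠ 0, f₂ ω ≠ 0 for μ-almost every ω. Let DIS = {ω : f₁ ω · f₂ ω < 0} and assume μ(DIS) > 0. On Ω define G ω = |f₁ ω| if f₁ ω · y ω > 0 and G ω = |f₂ ω| otherwise; define R ω = |f₂ ω| if f₁ ω · y ω > 0 and R ω = |f₁ ω| otherwise (so on DIS, G is the margin of the correct classifier and R the margin of the incorrect one). Let C ≥ 0 and k ≥ 0 be reals, and suppose: (a) under the conditional measure μ[·|DIS], the random variables G and R are independent, and (b) for every t ∈ (0,1], μ(G ≤ t | DIS) ≤ C·t^k. Then μ{ω : (f₁ ω + f₂ ω) · y ω ≤ 0} ≤ (err₁ + err₂ − d)/2 + C·∫_{DIS} (R ω)^k dμ, where err_v = μ{f_v · y < 0} and d = μ(DIS). -/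
open MeasureTheory
open scoped ProbabilityTheory

/-- upper bound on the error of the margin combination. Under the
independence of the correct margin `G` and the incorrect margin `R` on the disagreed
region `DIS` and a Tsybakov-type small-margin condition on `G`, the combination error
is at most `(err₁ + err₂ − d)/2 + C·∫_DIS R^k dμ`. -/
theorem stmt14 {Ω : Type*} [MeasurableSpace Ω] (μ : Measure Ω) [IsProbabilityMeasure μ]
    (y f₁ f₂ : Ω → ℝ) (hy : Measurable y) (hf₁ : Measurable f₁) (hf₂ : Measurable f₂)
    (hy1 : ∀ ω, y ω = 1 ∨ y ω = -1)
    (hb₁ : ∀ ω, |f₁ ω| ≤ 1) (hb₂ : ∀ ω, |f₂ ω| ≤ 1)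
    (hne : ∀ᵐ ω ∂μ, f₁ ω ≠ 0 ∧ f₂ ω ≠ 0)
    (G R : Ω → ℝ)
    (hG : ∀ ω, G ω = if 0 < f₁ ω * y ω then |f₁ ω| else |f₂ ω|)
    (hR : ∀ ω, R ω = if 0 < f₁ ω * y ω then |f₂ ω| else |f₁ ω|)
    (C k : ℝ) (hC : 0 ≤ C) (hk : 0 ≤ k)
    (hDIS : 0 < μ {ω | f₁ ω * f₂ ω < 0})
    (hindep : ProbabilityTheory.IndepFun G R (μ[|{ω | f₁ ω * f₂ ω < 0}]))
    (htsy : ∀ t ∈ Set.Ioc (0 : ℝ) 1,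
      ((μ[|{ω | f₁ ω * f₂ ω < 0}]) {ω | G ω ≤ t}).toReal ≤ C * t ^ k) :
    (μ {ω | (f₁ ω + f₂ ω) * y ω ≤ 0}).toReal ≤
      ((μ {ω | f₁ ω * y ω < 0}).toReal + (μ {ω | f₂ ω * y ω < 0}).toReal
        - (μ {ω | f₁ ω * f₂ ω < 0}).toReal) / 2
      + C * ∫ ω in {ω | f₁ ω * f₂ ω < 0}, R ω ^ k ∂μ := by
  set D : Set Ω := {ω | f₁ ω * f₂ ω < 0} with hD
  have mD : MeasurableSet D := measurableSet_lt (hf₁.mul hf₂) measurable_const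
  set W₁ : Set Ω := {ω | f₁ ω * y ω < 0} with hW₁
  set W₂ : Set Ω := {ω | f₂ ω * y ω < 0} with hW₂
  have mW₁ : MeasurableSet W₁ := measurableSet_lt (hf₁.mul hy) measurable_const
  have mW₂ : MeasurableSet W₂ := measurableSet_lt (hf₂.mul hy) measurable_const
  have mP : MeasurableSet {ω | 0 < f₁ ω * y ω} := measurableSet_lt measurable_const (hf₁.mul hy)
  have mG : Measurable G := by
    rw [funext hG]
    exact Measurable.ite mP hf₁.abs hf₂.abs
  have mR : Measurable R := by
    rw [funext hR]
    exact Measurable.ite mP hf₂.abs hf₁.abs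
  have hGR : MeasurableSet {ω | G ω ≤ R ω} := measurableSet_le mG mR
  -- counting
  have hdis : Disjoint (W₁ ∩ W₂) D := by
    rw [Set.disjoint_left]
    rintro ω ⟨h1, h2⟩ h3
    simp only [hW₁, hW₂, hD, Set.mem_setOf_eq] at h1 h2 h3
    rcases hy1 ω with h | h <;> rw [h] at h1 h2 <;> nlinarith
  have hU : (W₁ ∪ W₂ : Set Ω) =ᵐ[μ] ((W₁ ∩ W₂) ∪ D : Set Ω) := by
    filter_upwards [hne] with ω hω
    apply propext
    change (f₁ ω * y ω < 0 ∨ f₂ ω * y ω < 0) ↔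
      ((f₁ ω * y ω < 0 ∧ f₂ ω * y ω < 0) ∨ f₁ ω * f₂ ω < 0)
    obtain ⟨h1, h2⟩ := hω
    rw [mul_neg_iff (a := f₁ ω) (b := f₂ ω)]
    rcases hy1 ω with h | h <;> rw [h] <;> rcases lt_or_gt_of_ne h1 with h1 | h1 <;>
      rcases lt_or_gt_of_ne h2 with h2 | h2 <;>
      simp [h1, h2, not_lt.2 h1.le, not_lt.2 h2.le]
  have hcount : (μ W₁).toReal + (μ W₂).toReal
      = 2 * (μ (W₁ ∩ W₂)).toReal + (μ D).toReal := by
    have e := measure_union_add_inter (μ := μ) W₁ mW₂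
    rw [measure_congr hU, measure_union hdis mD] at e
    have e' := congrArg ENNReal.toReal e
    rw [ENNReal.toReal_add (by finiteness) (by finiteness),
      ENNReal.toReal_add (by finiteness) (by finiteness),
      ENNReal.toReal_add (by finiteness) (by finiteness)] at e'
    linarith
  have hE : (μ {ω | (f₁ ω + f₂ ω) * y ω ≤ 0}).toReal ≤
      (μ (W₁ ∩ W₂)).toReal + (μ (D ∩ {ω | G ω ≤ R ω})).toReal := by
    rw [← ENNReal.toReal_add (by finiteness) (by finiteness)]
    apply ENNReal.toReal_mono (by finiteness)
    refine le_trans (measure_mono_ae ?_) (measure_union_le _ _)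
    filter_upwards [hne] with ω hω
    change (f₁ ω + f₂ ω) * y ω ≤ 0 → ((f₁ ω * y ω < 0 ∧ f₂ ω * y ω < 0) ∨
      (f₁ ω * f₂ ω < 0 ∧ G ω ≤ R ω))
    obtain ⟨h1, h2⟩ := hω
    rw [hG, hR, mul_neg_iff (a := f₁ ω) (b := f₂ ω)]
    rcases hy1 ω with h | h <;> rw [h] <;> rcases lt_or_gt_of_ne h1 with h1 | h1 <;>
      rcases lt_or_gt_of_ne h2 with h2 | h2 <;>
      simp [h1, h2, not_lt.2 h1.le, not_lt.2 h2.le, abs_of_pos, abs_of_neg] <;> intros <;> linarith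
  -- probability part
  have hRb : ∀ ω ∈ D, R ω ∈ Set.Ioc (0:ℝ) 1 := by
    intro ω hω
    have hω : f₁ ω * f₂ ω < 0 := hω
    have h1 : f₁ ω ≠ 0 := left_ne_zero_of_mul hω.ne
    have h2 : f₂ ω ≠ 0 := right_ne_zero_of_mul hω.ne
    rw [hR]
    split_ifs
    · exact ⟨abs_pos.2 h2, hb₂ ω⟩
    · exact ⟨abs_pos.2 h1, hb₁ ω⟩
  have hP : IsProbabilityMeasure (μ[|D]) := ProbabilityTheory.cond_isProbabilityMeasure hDIS.ne'
  have hae : ∀ᵐ ω ∂(μ[|D]), ω ∈ D := ProbabilityTheory.ae_cond_mem mD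
  have hint : Integrable (fun ω => C * R ω ^ k) (μ[|D]) := by
    refine Integrable.of_bound ((mR.pow_const k).const_mul C).aestronglyMeasurable C ?_
    filter_upwards [hae] with ω hω
    obtain ⟨h0, h1⟩ := hRb ω hω
    have := Real.rpow_nonneg h0.le k
    rw [Real.norm_of_nonneg (mul_nonneg hC this)]
    exact mul_le_of_le_one_right hC (Real.rpow_le_one h0.le h1 hk)
  have hkey : (μ[|D]) {ω | G ω ≤ R ω} ≤ ENNReal.ofReal (∫ ω, C * R ω ^ k ∂(μ[|D])) := by
    have hm := (ProbabilityTheory.indepFun_iff_map_prod_eq_prod_map_map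
      mR.aemeasurable mG.aemeasurable).1 hindep.symm
    have mS : MeasurableSet {p : ℝ × ℝ | p.2 ≤ p.1} := measurableSet_le measurable_snd measurable_fst
    have h1 : (μ[|D]) {ω | G ω ≤ R ω}
        = ((μ[|D]).map (fun ω => (R ω, G ω))) {p : ℝ × ℝ | p.2 ≤ p.1} := by
      rw [Measure.map_apply (mR.prodMk mG) mS]; rfl
    rw [h1, hm, Measure.prod_apply mS, lintegral_map (measurable_measure_prodMk_left mS) mR,
      ofReal_integral_eq_lintegral_ofReal hint]
    · apply lintegral_mono_ae
      filter_upwards [hae] with ω hω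
      rw [Measure.map_apply mG (measurable_prodMk_left mS)]
      rw [← ENNReal.ofReal_toReal (measure_ne_top (μ[|D]) _)]
      exact ENNReal.ofReal_le_ofReal (htsy _ (hRb ω hω))
    · filter_upwards [hae] with ω hω
      exact mul_nonneg hC (Real.rpow_nonneg (hRb ω hω).1.le k)
  have hfin : (μ (D ∩ {ω | G ω ≤ R ω})).toReal ≤ C * ∫ ω in D, R ω ^ k ∂μ := by
    have hpos : 0 < (μ D).toReal := ENNReal.toReal_pos hDIS.ne' (by finiteness)
    rw [← ProbabilityTheory.cond_mul_eq_inter mD, ENNReal.toReal_mul]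
    have h2 : ((μ[|D]) {ω | G ω ≤ R ω}).toReal ≤ ∫ ω, C * R ω ^ k ∂(μ[|D]) := by
      refine ENNReal.toReal_le_of_le_ofReal (integral_nonneg_of_ae ?_) hkey
      filter_upwards [hae] with ω hω
      exact mul_nonneg hC (Real.rpow_nonneg (hRb ω hω).1.le k)
    have h3 : ∫ ω, C * R ω ^ k ∂(μ[|D]) = (μ D).toReal⁻¹ * (C * ∫ ω in D, R ω ^ k ∂μ) := by
      rw [integral_const_mul, ProbabilityTheory.cond, integral_smul_measure, ENNReal.toReal_inv,
        smul_eq_mul]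
      ring
    rw [h3] at h2
    calc _ ≤ ((μ D).toReal⁻¹ * (C * ∫ ω in D, R ω ^ k ∂μ)) * (μ D).toReal := by gcongr
      _ = _ := by field_simp
  linarith
end

section
/- Let μ be a probability measure on a measurable space Ω, let y : Ω → {−1,+1} and f₁, f₂ : Ω → ℝ be measurable with |f₁| ≤ 1, |f₂| ≤ 1 and f₁ ω ≠ 0, f₂ ω ≠ 0 for μ-almost every ω. Let DIS = {ω : f₁ ω · f₂ ω < 0} with μ(DIS) > 0, define G and R on Ω by G ω = |f₁ ω| if f₁ ω · y ω > 0 and G ω = |f₂ ω| otherwise, R ω = |f₂ ω| if f₁ ω · y ω > 0 and R ω = |f₁ ω| otherwise. Let C ≥ 0 and k ≥ 0 be reals, and suppose: (a) under μ[·|DIS] the random variables G and R are independent; (b) for every t ∈ (0,1], μ(G ≤ t | DIS) ≤ C·t^k; (c) err₁ ≤ err₂, where err_v = μ{f_v · y < 0}; and (d) C·∫_{DIS} (R ω)^k dμ < (err₁ − err₂ + d)/2, where d = μ(DIS). Then μ{ω : (f₁ ω + f₂ ω) · y ω ≤ 0} < err₁. -/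
open MeasureTheory
open scoped ProbabilityTheory

theorem aux_indep {Ω : Type*} [MeasurableSpace Ω] (ν : Measure Ω) [IsProbabilityMeasure ν]
    (G R : Ω → ℝ) (hGm : Measurable G) (hRm : Measurable R) (C k : ℝ) (hC : 0 ≤ C) (hk : 0 ≤ k)
    (hindep : ProbabilityTheory.IndepFun G R ν)
    (hR01 : ∀ᵐ ω ∂ν, R ω ∈ Set.Ioc (0 : ℝ) 1)
    (htsy : ∀ t ∈ Set.Ioc (0 : ℝ) 1, (ν {ω | G ω ≤ t}).toReal ≤ C * t ^ k) :
    (ν {ω | G ω ≤ R ω}).toReal ≤ C * ∫ ω, R ω ^ k ∂ν := by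
  have hm : MeasurableSet {p : ℝ × ℝ | p.1 ≤ p.2} := measurableSet_le measurable_fst measurable_snd
  have hprod := (ProbabilityTheory.indepFun_iff_map_prod_eq_prod_map_map
    hGm.aemeasurable hRm.aemeasurable).1 hindep
  have : IsProbabilityMeasure (ν.map G) := Measure.isProbabilityMeasure_map hGm.aemeasurable
  have : IsProbabilityMeasure (ν.map R) := Measure.isProbabilityMeasure_map hRm.aemeasurable
  have h1 : ν {ω | G ω ≤ R ω} = ∫⁻ ω, ν {x | G x ≤ R ω} ∂ν := by
    have e1 : ν {ω | G ω ≤ R ω} = (ν.map (fun ω => (G ω, R ω))) {p : ℝ × ℝ | p.1 ≤ p.2} := by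
      rw [Measure.map_apply (hGm.prodMk hRm) hm]; rfl
    rw [e1, hprod, Measure.prod_apply_symm hm,
      lintegral_map (measurable_measure_prodMk_right hm) hRm]
    refine lintegral_congr fun ω => ?_
    rw [Measure.map_apply hGm (measurable_prodMk_right hm)]; rfl
  have hint : Integrable (fun ω => C * R ω ^ k) ν := by
    refine Integrable.of_bound (C := C) (by fun_prop) ?_
    filter_upwards [hR01] with ω hω
    have := Real.rpow_le_one hω.1.le hω.2 hk
    have h0 := Real.rpow_nonneg hω.1.le k
    rw [Real.norm_of_nonneg (mul_nonneg hC h0)]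
    nlinarith
  have hnn : 0 ≤ᵐ[ν] fun ω => C * R ω ^ k := by
    filter_upwards [hR01] with ω hω
    exact mul_nonneg hC (Real.rpow_nonneg hω.1.le k)
  rw [← integral_const_mul]
  refine ENNReal.toReal_le_of_le_ofReal (integral_nonneg_of_ae hnn) ?_
  rw [h1, ofReal_integral_eq_lintegral_ofReal hint hnn]
  refine lintegral_mono_ae ?_
  filter_upwards [hR01] with ω hω
  exact (ENNReal.le_ofReal_iff_toReal_le (measure_ne_top _ _)
    ((ENNReal.toReal_nonneg).trans (htsy _ hω))).2 (htsy _ hω)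

/-- when the confidence risk `C·∫_DIS R^k dμ` is smaller than
`(err₁ − err₂ + d)/2` (with `err₁ ≤ err₂`), the margin combination is strictly
better than the better individual classifier: `err_com < err₁`. -/
theorem stmt15 {Ω : Type*} [MeasurableSpace Ω] (μ : Measure Ω) [IsProbabilityMeasure μ]
    (y f₁ f₂ : Ω → ℝ) (hy : Measurable y) (hf₁ : Measurable f₁) (hf₂ : Measurable f₂)
    (hy1 : ∀ ω, y ω = 1 ∨ y ω = -1)
    (hb₁ : ∀ ω, |f₁ ω| ≤ 1) (hb₂ : ∀ ω, |f₂ ω| ≤ 1)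
    (hne : ∀ᵐ ω ∂μ, f₁ ω ≠ 0 ∧ f₂ ω ≠ 0)
    (G R : Ω → ℝ)
    (hG : ∀ ω, G ω = if 0 < f₁ ω * y ω then |f₁ ω| else |f₂ ω|)
    (hR : ∀ ω, R ω = if 0 < f₁ ω * y ω then |f₂ ω| else |f₁ ω|)
    (C k : ℝ) (hC : 0 ≤ C) (hk : 0 ≤ k)
    (hDIS : 0 < μ {ω | f₁ ω * f₂ ω < 0})
    (hindep : ProbabilityTheory.IndepFun G R (μ[|{ω | f₁ ω * f₂ ω < 0}]))
    (htsy : ∀ t ∈ Set.Ioc (0 : ℝ) 1,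
      ((μ[|{ω | f₁ ω * f₂ ω < 0}]) {ω | G ω ≤ t}).toReal ≤ C * t ^ k)
    (herr : (μ {ω | f₁ ω * y ω < 0}).toReal ≤ (μ {ω | f₂ ω * y ω < 0}).toReal)
    (hrisk : C * ∫ ω in {ω | f₁ ω * f₂ ω < 0}, R ω ^ k ∂μ <
      ((μ {ω | f₁ ω * y ω < 0}).toReal - (μ {ω | f₂ ω * y ω < 0}).toReal
        + (μ {ω | f₁ ω * f₂ ω < 0}).toReal) / 2) :
    (μ {ω | (f₁ ω + f₂ ω) * y ω ≤ 0}).toReal < (μ {ω | f₁ ω * y ω < 0}).toReal := by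
  have hGm : Measurable G := by
    rw [funext hG]
    exact Measurable.ite (measurableSet_lt measurable_const (hf₁.mul hy)) hf₁.abs hf₂.abs
  have hRm : Measurable R := by
    rw [funext hR]
    exact Measurable.ite (measurableSet_lt measurable_const (hf₁.mul hy)) hf₂.abs hf₁.abs
  have hSm : MeasurableSet {ω | f₁ ω * f₂ ω < 0} :=
    measurableSet_lt (hf₁.mul hf₂) measurable_const
  have hN1m : MeasurableSet {ω | f₁ ω * y ω < 0} :=
    measurableSet_lt (hf₁.mul hy) measurable_const
  have hN2m : MeasurableSet {ω | f₂ ω * y ω < 0} :=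
    measurableSet_lt (hf₂.mul hy) measurable_const
  have hR01 : ∀ ω, f₁ ω * f₂ ω < 0 → R ω ∈ Set.Ioc (0 : ℝ) 1 := by
    intro ω h
    have a1 : f₁ ω ≠ 0 := by rintro e; simp [e] at h
    have a2 : f₂ ω ≠ 0 := by rintro e; simp [e] at h
    rw [hR]
    split_ifs
    · exact ⟨abs_pos.2 a2, hb₂ ω⟩
    · exact ⟨abs_pos.2 a1, hb₁ ω⟩
  have hcom : ∀ ω, f₁ ω * f₂ ω < 0 → (f₁ ω + f₂ ω) * y ω ≤ 0 → G ω ≤ R ω := by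
    intro ω h hc
    rw [hG, hR]
    rcases mul_neg_iff.1 h with ⟨h1, h2⟩ | ⟨h1, h2⟩ <;> rcases hy1 ω with e | e <;>
      rw [e] at hc ⊢ <;> simp only [abs_of_pos, abs_of_neg, h1, h2] <;> split_ifs <;> linarith
  have hd1 : (μ {ω | f₁ ω * y ω < 0}).toReal = μ.real ({ω | f₁ ω * y ω < 0} ∩ {ω | f₁ ω * f₂ ω < 0})
      + μ.real ({ω | f₁ ω * y ω < 0} \ {ω | f₁ ω * f₂ ω < 0}) :=
    (measureReal_inter_add_diff hSm).symm
  have hd2 : (μ {ω | f₂ ω * y ω < 0}).toReal = μ.real ({ω | f₂ ω * y ω < 0} ∩ {ω | f₁ ω * f₂ ω < 0})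
      + μ.real ({ω | f₂ ω * y ω < 0} \ {ω | f₁ ω * f₂ ω < 0}) :=
    (measureReal_inter_add_diff hSm).symm
  have hB : μ.real ({ω | f₂ ω * y ω < 0} \ {ω | f₁ ω * f₂ ω < 0}) =
      μ.real ({ω | f₁ ω * y ω < 0} \ {ω | f₁ ω * f₂ ω < 0}) := by
    refine measureReal_congr ?_
    filter_upwards [hne] with ω hω
    refine propext ?_
    change (f₂ ω * y ω < 0 ∧ ¬ f₁ ω * f₂ ω < 0) ↔ (f₁ ω * y ω < 0 ∧ ¬ f₁ ω * f₂ ω < 0)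
    rcases lt_or_gt_of_ne hω.1 with h1 | h1 <;> rcases lt_or_gt_of_ne hω.2 with h2 | h2 <;>
      rcases hy1 ω with e | e <;> simp [e, mul_neg_iff, h1, h2, h1.le, h2.le, not_lt_of_gt]
  have hS : (μ {ω | f₁ ω * f₂ ω < 0}).toReal =
      μ.real ({ω | f₁ ω * y ω < 0} ∩ {ω | f₁ ω * f₂ ω < 0})
      + μ.real ({ω | f₂ ω * y ω < 0} ∩ {ω | f₁ ω * f₂ ω < 0}) := by
    rw [← measureReal_union _ (hN2m.inter hSm)]
    · change μ.real _ = _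
      congr 1
      ext ω
      simp only [Set.mem_setOf_eq, Set.mem_union, Set.mem_inter_iff]
      constructor
      · intro h
        rcases mul_neg_iff.1 h with ⟨h1, h2⟩ | ⟨h1, h2⟩ <;> rcases hy1 ω with e | e <;>
          simp [e, h, h1, h2]
      · rintro (h | h) <;> exact h.2
    · rw [Set.disjoint_left]
      rintro ω ⟨h1, h⟩ ⟨h2, -⟩
      simp only [Set.mem_setOf_eq] at h h1 h2
      rcases mul_neg_iff.1 h with ⟨h3, h4⟩ | ⟨h3, h4⟩ <;> rcases hy1 ω with e | e <;>
        rw [e] at h1 h2 <;> linarith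
  have hC1 : (μ {ω | (f₁ ω + f₂ ω) * y ω ≤ 0}).toReal ≤
      μ.real ({ω | f₁ ω * y ω < 0} \ {ω | f₁ ω * f₂ ω < 0}) +
      μ.real ({ω | f₁ ω * f₂ ω < 0} ∩ {ω | G ω ≤ R ω}) := by
    refine le_trans ?_ (measureReal_union_le _ _)
    refine ENNReal.toReal_mono (measure_ne_top _ _) (measure_mono_ae ?_)
    filter_upwards [hne] with ω hω
    intro (hc : (f₁ ω + f₂ ω) * y ω ≤ 0)
    by_cases h : f₁ ω * f₂ ω < 0
    · exact Or.inr ⟨h, hcom ω h hc⟩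
    · refine Or.inl ⟨?_, h⟩
      change f₁ ω * y ω < 0
      rcases lt_or_gt_of_ne hω.1 with h1 | h1 <;> rcases lt_or_gt_of_ne hω.2 with h2 | h2 <;>
        rcases hy1 ω with e | e <;> rw [e] at hc ⊢ <;> first | linarith | (exfalso; nlinarith)
  have : IsProbabilityMeasure (μ[|{ω | f₁ ω * f₂ ω < 0}]) :=
    ProbabilityTheory.cond_isProbabilityMeasure hDIS.ne'
  have key := aux_indep (μ[|{ω | f₁ ω * f₂ ω < 0}]) G R hGm hRm C k hC hk hindep
    ((ProbabilityTheory.ae_cond_mem hSm).mono hR01) htsy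
  have hdpos : 0 < (μ {ω | f₁ ω * f₂ ω < 0}).toReal :=
    ENNReal.toReal_pos hDIS.ne' (measure_ne_top _ _)
  rw [ProbabilityTheory.cond_apply hSm, ProbabilityTheory.cond, integral_smul_measure,
    ENNReal.toReal_mul, ENNReal.toReal_inv, smul_eq_mul, mul_left_comm] at key
  have key2 := le_of_mul_le_mul_left key (inv_pos.2 hdpos)
  change μ.real _ ≤ _ at key2
  linarith
end

section
/- Let d ≥ 2, let B ⊆ EuclideanSpace ℝ (Fin d) be the closed unit ball centered at the origin, and let μ be the uniform probability measure on B (Lebesgue measure restricted to B and normalized). Then for all unit vectors w, w⋆: (i) μ{x : ⟪w, x⟫ · ⟪w⋆, x⟫ < 0} = Real.arccos ⟪w, w⋆⟫ / π; and (ii) for every x with ‖x‖ ≤ 1, |⟪w, x⟫ − ⟪w⋆, x⟫| ≤ π · μ{x' : ⟪w, x'⟫ · ⟪w⋆, x'⟫ < 0}. -/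
open MeasureTheory
open scoped RealInnerProductSpace


lemma aux_meas (θ φ : ℝ) (h0 : 0 ≤ θ) (h1 : θ ≤ Real.pi) :
    (volume.restrict (Set.Ioc 0 Real.pi)) {t : ℝ | Real.cos (t + φ) * Real.cos (t + φ - θ) < 0}
      = ENNReal.ofReal θ := by
  set A : Set ℝ := {t : ℝ | Real.cos t * Real.cos (t - θ) < 0} with hA
  have hpi := Real.pi_pos
  have hAm : MeasurableSet A :=
    (isOpen_lt (by fun_prop) continuous_const).measurableSet
  have hBm : MeasurableSet {t : ℝ | Real.cos (t + φ) * Real.cos (t + φ - θ) < 0} :=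
    (isOpen_lt (by fun_prop) continuous_const).measurableSet
  set g : ℝ → ℝ := A.indicator 1 with hg
  have hper : Function.Periodic g Real.pi := by
    intro t
    have : (t + Real.pi ∈ A) ↔ t ∈ A := by
      simp only [hA, Set.mem_ofPred_eq]
      rw [show t + Real.pi - θ = (t - θ) + Real.pi by ring, Real.cos_add_pi, Real.cos_add_pi]
      simp
    simp only [hg, Set.indicator, this]
    rfl
  have e1 : ∫ t in (0:ℝ)..Real.pi, g (t + φ) = θ := by
    rw [intervalIntegral.integral_comp_add_right]
    have := hper.intervalIntegral_add_eq (0 + φ) (-(Real.pi/2))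
    rw [show Real.pi + φ = 0 + φ + Real.pi by ring, this,
      intervalIntegral.integral_of_le (by linarith), integral_Ioc_eq_integral_Ioo]
    have : Set.EqOn g ((Set.Ioo (-(Real.pi/2)) (θ - Real.pi/2)).indicator 1)
        (Set.Ioo (-(Real.pi/2)) (-(Real.pi/2) + Real.pi)) := by
      rintro s ⟨hs1, hs2⟩
      have hc : 0 < Real.cos s := Real.cos_pos_of_mem_Ioo ⟨hs1, by linarith⟩
      have : s ∈ A ↔ s ∈ Set.Ioo (-(Real.pi/2)) (θ - Real.pi/2) := by
        simp only [hA, Set.mem_ofPred_eq, Set.mem_Ioo, hs1, true_and]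
        constructor
        · intro h
          by_contra! h'
          have : 0 ≤ Real.cos (s - θ) :=
            Real.cos_nonneg_of_mem_Icc ⟨by linarith, by linarith⟩
          nlinarith [mul_nonneg hc.le this]
        · intro h
          have : Real.cos (s - θ) < 0 := by
            rw [← Real.cos_neg]
            exact Real.cos_neg_of_pi_div_two_lt_of_lt (by linarith) (by linarith)
          exact mul_neg_of_pos_of_neg hc this
      simp only [hg, Set.indicator, this]
      congr
    rw [setIntegral_congr_fun measurableSet_Ioo this, setIntegral_indicator measurableSet_Ioo,
      Set.inter_eq_right.2 (Set.Ioo_subset_Ioo le_rfl (by linarith))]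
    simp [h0]
  rw [intervalIntegral.integral_of_le hpi.le] at e1
  have e2 : (fun t => g (t + φ)) =
      ({t : ℝ | Real.cos (t + φ) * Real.cos (t + φ - θ) < 0}).indicator 1 := rfl
  rw [e2, integral_indicator_one hBm] at e1
  rw [measureReal_def] at e1
  exact ((ENNReal.ofReal_toReal (measure_ne_top _ _)).symm.trans (congrArg ENNReal.ofReal e1))

section
variable {d : ℕ}

noncomputable def rotL (u v : EuclideanSpace ℝ (Fin d)) (t : ℝ) :
    EuclideanSpace ℝ (Fin d) →ₗ[ℝ] EuclideanSpace ℝ (Fin d) where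
  toFun x := x + ((Real.cos t - 1) * ⟪u, x⟫ - Real.sin t * ⟪v, x⟫) • u
    + (Real.sin t * ⟪u, x⟫ + (Real.cos t - 1) * ⟪v, x⟫) • v
  map_add' x y := by simp only [inner_add_right]; module
  map_smul' c x := by simp only [inner_smul_right, RingHom.id_apply]; module

lemma rotL_apply (u v : EuclideanSpace ℝ (Fin d)) (t : ℝ) (x : EuclideanSpace ℝ (Fin d)) :
    rotL u v t x = x + ((Real.cos t - 1) * ⟪u, x⟫ - Real.sin t * ⟪v, x⟫) • u
    + (Real.sin t * ⟪u, x⟫ + (Real.cos t - 1) * ⟪v, x⟫) • v := rfl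

lemma rotL_inner_u (u v : EuclideanSpace ℝ (Fin d)) (hu : ⟪u, u⟫ = 1)
    (huv : ⟪u, v⟫ = 0) (t : ℝ) (x : EuclideanSpace ℝ (Fin d)) :
    ⟪u, rotL u v t x⟫ = Real.cos t * ⟪u, x⟫ - Real.sin t * ⟪v, x⟫ := by
  rw [rotL_apply, inner_add_right, inner_add_right, inner_smul_right, inner_smul_right, hu, huv]
  ring

lemma rotL_inner_v (u v : EuclideanSpace ℝ (Fin d)) (hv : ⟪v, v⟫ = 1)
    (huv : ⟪u, v⟫ = 0) (t : ℝ) (x : EuclideanSpace ℝ (Fin d)) :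
    ⟪v, rotL u v t x⟫ = Real.sin t * ⟪u, x⟫ + Real.cos t * ⟪v, x⟫ := by
  rw [rotL_apply, inner_add_right, inner_add_right, inner_smul_right, inner_smul_right, hv,
    real_inner_comm u v, huv]
  ring

lemma rotL_norm (u v : EuclideanSpace ℝ (Fin d)) (hu : ⟪u, u⟫ = 1) (hv : ⟪v, v⟫ = 1)
    (huv : ⟪u, v⟫ = 0) (t : ℝ) (x : EuclideanSpace ℝ (Fin d)) :
    ‖rotL u v t x‖ = ‖x‖ := by
  have hvu : ⟪v, u⟫ = 0 := by rw [real_inner_comm, huv]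
  have : ⟪rotL u v t x, rotL u v t x⟫ = ⟪x, x⟫ := by
    rw [rotL_apply]
    simp only [inner_add_right, inner_add_left, inner_smul_left, inner_smul_right, hu, hv, huv,
      hvu, real_inner_comm u x, real_inner_comm v x]
    simp only [conj_trivial]
    have := Real.sin_sq_add_cos_sq t
    have h2 : Real.sin t ^ 2 = 1 - Real.cos t ^ 2 := by linarith
    ring_nf
    rw [h2]
    ring
  rw [real_inner_self_eq_norm_sq, real_inner_self_eq_norm_sq] at this
  exact (sq_eq_sq₀ (norm_nonneg _) (norm_nonneg _)).1 this

lemma exists_perp (hd : 2 ≤ d) (u ws : EuclideanSpace ℝ (Fin d)) (hu : ‖u‖ = 1)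
    (hws : ‖ws‖ = 1) : ∃ v : EuclideanSpace ℝ (Fin d), ⟪v, v⟫ = 1 ∧ ⟪u, v⟫ = 0 ∧
      ws = Real.cos (Real.arccos ⟪u, ws⟫) • u + Real.sin (Real.arccos ⟪u, ws⟫) • v := by
  have hab := abs_real_inner_le_norm u ws
  rw [hu, hws, one_mul, abs_le] at hab
  rw [Real.cos_arccos hab.1 hab.2, Real.sin_arccos]
  set c := ⟪u, ws⟫ with hc
  set z := ws - c • u with hz
  have huu : ⟪u, u⟫ = 1 := by rw [real_inner_self_eq_norm_sq, hu]; norm_num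
  have hww : ⟪ws, ws⟫ = 1 := by rw [real_inner_self_eq_norm_sq, hws]; norm_num
  have huz : ⟪u, z⟫ = 0 := by
    rw [hz, inner_sub_right, inner_smul_right, huu, ← hc]; ring
  have hzz : ⟪z, z⟫ = 1 - c ^ 2 := by
    rw [hz, inner_sub_left, ← hz, inner_smul_left, huz, hz, inner_sub_right, inner_smul_right,
      real_inner_comm u ws, hww, ← hc]
    simp
    ring
  have hzn : ‖z‖ = √(1 - c ^ 2) := by rw [← hzz, real_inner_self_eq_norm_sq, Real.sqrt_sq (norm_nonneg _)]
  rw [← hzn]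
  by_cases h : z = 0
  · have : ∃ y ∈ (ℝ ∙ u)ᗮ, y ≠ 0 := by
      apply Submodule.exists_mem_ne_zero_of_ne_bot
      intro hb
      rw [Submodule.orthogonal_eq_bot_iff] at hb
      have h1 := finrank_span_le_card (R := ℝ) ({u} : Set (EuclideanSpace ℝ (Fin d)))
      rw [hb] at h1
      simp at h1
      omega
    obtain ⟨y, hy, hy0⟩ := this
    rw [Submodule.mem_orthogonal_singleton_iff_inner_right] at hy
    refine ⟨‖y‖⁻¹ • y, ?_, ?_, ?_⟩
    · rw [real_inner_self_eq_norm_sq, norm_smul, norm_inv, norm_norm, inv_mul_cancel₀ (norm_ne_zero_iff.2 hy0)]; norm_num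
    · rw [inner_smul_right, hy, mul_zero]
    · rw [h]; simp; exact sub_eq_zero.1 h
  · refine ⟨‖z‖⁻¹ • z, ?_, ?_, ?_⟩
    · rw [real_inner_self_eq_norm_sq, norm_smul, norm_inv, norm_norm, inv_mul_cancel₀ (norm_ne_zero_iff.2 h)]; norm_num
    · rw [inner_smul_right, huz, mul_zero]
    · rw [smul_smul, mul_inv_cancel₀ (norm_ne_zero_iff.2 h), one_smul, hz]; abel

lemma main_vol (hd : 2 ≤ d) (w ws : EuclideanSpace ℝ (Fin d)) (hw : ‖w‖ = 1) (hws : ‖ws‖ = 1) :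
    ENNReal.ofReal Real.pi *
    (volume.restrict (Metric.closedBall (0 : EuclideanSpace ℝ (Fin d)) 1))
      {x | ⟪w, x⟫ * ⟪ws, x⟫ < 0} = ENNReal.ofReal (Real.arccos ⟪w, ws⟫) *
      volume (Metric.closedBall (0 : EuclideanSpace ℝ (Fin d)) 1) := by
  obtain ⟨v, hv, huv, hwsv⟩ := exists_perp hd w ws hw hws
  have hu : ⟪w, w⟫ = 1 := by rw [real_inner_self_eq_norm_sq, hw]; norm_num
  set θ := Real.arccos ⟪w, ws⟫ with hθ
  set B := Metric.closedBall (0 : EuclideanSpace ℝ (Fin d)) 1 with hB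
  set S : Set (EuclideanSpace ℝ (Fin d)) := {x | ⟪w, x⟫ * ⟪ws, x⟫ < 0} with hS
  have hSm : MeasurableSet S := (isOpen_lt (by fun_prop) continuous_const).measurableSet
  set T : Set (ℝ × EuclideanSpace ℝ (Fin d)) := {p | rotL w v p.1 p.2 ∈ S} with hT
  have hTm : MeasurableSet T := by
    apply IsOpen.measurableSet
    simp only [hT, hS, rotL_apply, Set.mem_ofPred_eq]
    exact isOpen_lt (by fun_prop) continuous_const
  have e1 := Measure.prod_apply (μ := volume.restrict (Set.Ioc 0 Real.pi))
    (ν := volume.restrict B) hTm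
  have e2 := Measure.prod_apply_symm (μ := volume.restrict (Set.Ioc 0 Real.pi))
    (ν := volume.restrict B) hTm
  have f1 : ∀ t : ℝ, (volume.restrict B) (Prod.mk t ⁻¹' T) = (volume.restrict B) S := by
    intro t
    let R : EuclideanSpace ℝ (Fin d) →ₗᵢ[ℝ] EuclideanSpace ℝ (Fin d) :=
      ⟨rotL w v t, rotL_norm w v hu hv huv t⟩
    let R' := R.toLinearIsometryEquiv rfl
    have hR : ∀ x, R' x = rotL w v t x := fun x => rfl
    have hp : Prod.mk t ⁻¹' T = R' ⁻¹' S := rfl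
    have hb : B = R' ⁻¹' B := by
      ext x
      simp [hB]
    rw [Measure.restrict_apply (hTm.preimage (by fun_prop)), Measure.restrict_apply hSm, hp]
    nth_rw 1 [hb]
    rw [← Set.preimage_inter]
    exact R'.measurePreserving.measure_preimage
      (hSm.inter measurableSet_closedBall).nullMeasurableSet
  have f2 : ∀ᵐ x ∂(volume.restrict B), (volume.restrict (Set.Ioc 0 Real.pi))
      ((fun t => (t, x)) ⁻¹' T) = ENNReal.ofReal θ := by
    apply ae_restrict_of_ae
    have hnull : ∀ᵐ x : EuclideanSpace ℝ (Fin d), ⟪w, x⟫ ≠ 0 := by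
      have := Measure.addHaar_submodule (volume : Measure (EuclideanSpace ℝ (Fin d)))
        (ℝ ∙ w)ᗮ (by
          intro h
          have : w ∈ (ℝ ∙ w)ᗮ := by rw [h]; trivial
          rw [Submodule.mem_orthogonal_singleton_iff_inner_right, hu] at this
          exact one_ne_zero this)
      rw [ae_iff]
      convert this using 2
      ext x
      simp [Submodule.mem_orthogonal_singleton_iff_inner_right]
    filter_upwards [hnull] with x hx
    set p := ⟪w, x⟫ with hp
    set q := ⟪v, x⟫ with hq
    let ζ : ℂ := ⟨p, q⟩
    have hζ : ζ ≠ 0 := fun h => hx (congrArg Complex.re h)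
    have hr : 0 < ‖ζ‖ := norm_pos_iff.2 hζ
    have hpc : p = ‖ζ‖ * Real.cos ζ.arg := (Complex.norm_mul_cos_arg ζ).symm
    have hqc : q = ‖ζ‖ * Real.sin ζ.arg := (Complex.norm_mul_sin_arg ζ).symm
    rw [← aux_meas θ ζ.arg (Real.arccos_nonneg _) (Real.arccos_le_pi _)]
    congr 1
    ext t
    simp only [hT, hS, Set.mem_preimage, Set.mem_ofPred_eq]
    have a1 : ⟪w, rotL w v t x⟫ = ‖ζ‖ * Real.cos (t + ζ.arg) := by
      rw [rotL_inner_u w v hu huv, ← hp, ← hq, hpc, hqc, Real.cos_add]; ring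
    have a2 : ⟪ws, rotL w v t x⟫ = ‖ζ‖ * Real.cos (t + ζ.arg - θ) := by
      rw [hwsv, inner_add_left, inner_smul_left, inner_smul_left, a1,
        rotL_inner_v w v hv huv, ← hp, ← hq, hpc, hqc, Real.cos_sub, Real.sin_add]
      simp only [conj_trivial]
      ring
    rw [a1, a2, show ‖ζ‖ * Real.cos (t + ζ.arg) * (‖ζ‖ * Real.cos (t + ζ.arg - θ))
      = (‖ζ‖ * ‖ζ‖) * (Real.cos (t + ζ.arg) * Real.cos (t + ζ.arg - θ)) by ring]
    exact ⟨fun h => (pos_iff_neg_of_mul_neg h).1 (mul_pos hr hr),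
      fun h => mul_neg_of_pos_of_neg (mul_pos hr hr) h⟩
  rw [e2, lintegral_congr_ae f2] at e1
  simp only [f1, lintegral_const] at e1
  simp only [Measure.restrict_apply MeasurableSet.univ, Set.univ_inter, Real.volume_Ioc,
    sub_zero] at e1
  rw [e1, mul_comm]

end

/-- for the uniform distribution `μ` on the unit ball of `ℝ^d` (`d ≥ 2`)
and unit vectors `w`, `w⋆`: (i) the disagreement between the linear classifiers
`sign⟪w,·⟫` and `sign⟪w⋆,·⟫` equals `arccos⟪w,w⋆⟫ / π`; (ii) the margin Lipschitz
condition `|⟪w,x⟫ − ⟪w⋆,x⟫| ≤ π · disagreement` holds on the ball. -/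
theorem stmt17 (d : ℕ) (hd : 2 ≤ d)
    (μ : Measure (EuclideanSpace ℝ (Fin d)))
    (hμ : μ = (volume (Metric.closedBall (0 : EuclideanSpace ℝ (Fin d)) 1))⁻¹ •
      volume.restrict (Metric.closedBall (0 : EuclideanSpace ℝ (Fin d)) 1))
    (w ws : EuclideanSpace ℝ (Fin d)) (hw : ‖w‖ = 1) (hws : ‖ws‖ = 1) :
    (μ {x | ⟪w, x⟫ * ⟪ws, x⟫ < 0}).toReal = Real.arccos ⟪w, ws⟫ / Real.pi
    ∧ ∀ x : EuclideanSpace ℝ (Fin d), ‖x‖ ≤ 1 →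
        |⟪w, x⟫ - ⟪ws, x⟫| ≤ Real.pi * (μ {x' | ⟪w, x'⟫ * ⟪ws, x'⟫ < 0}).toReal := by
  have hpi := Real.pi_pos
  have key : (μ {x | ⟪w, x⟫ * ⟪ws, x⟫ < 0}).toReal = Real.arccos ⟪w, ws⟫ / Real.pi := by
    have h := congrArg ENNReal.toReal (main_vol hd w ws hw hws)
    rw [ENNReal.toReal_mul, ENNReal.toReal_mul, ENNReal.toReal_ofReal hpi.le,
      ENNReal.toReal_ofReal (Real.arccos_nonneg _)] at h
    have hv : 0 < (volume (Metric.closedBall (0 : EuclideanSpace ℝ (Fin d)) 1)).toReal :=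
      ENNReal.toReal_pos (Metric.measure_closedBall_pos _ _ one_pos).ne'
        measure_closedBall_lt_top.ne
    rw [hμ, Measure.smul_apply, smul_eq_mul, ENNReal.toReal_mul, ENNReal.toReal_inv,
      eq_div_iff hpi.ne', mul_assoc, mul_comm _ Real.pi, h]
    field_simp
  refine ⟨key, fun x hx => ?_⟩
  rw [key, mul_div_cancel₀ _ hpi.ne', ← inner_sub_left]
  have hab := abs_real_inner_le_norm w ws
  rw [hw, hws, one_mul, abs_le] at hab
  have h1 : ‖w - ws‖ ^ 2 ≤ Real.arccos ⟪w, ws⟫ ^ 2 := by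
    have h := Real.one_sub_sq_div_two_le_cos (x := Real.arccos ⟪w, ws⟫)
    rw [Real.cos_arccos hab.1 hab.2] at h
    rw [norm_sub_sq_real, hw, hws]
    linarith
  have h2 : ‖w - ws‖ ≤ Real.arccos ⟪w, ws⟫ :=
    (sq_le_sq₀ (norm_nonneg _) (Real.arccos_nonneg _)).1 h1
  calc |⟪w - ws, x⟫| ≤ ‖w - ws‖ * ‖x‖ := abs_real_inner_le_norm _ _
    _ ≤ ‖w - ws‖ * 1 := by gcongr
    _ ≤ _ := by rw [mul_one]; exact h2
end
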